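/- arXiv:2308.13740 — 2 statements merged into one kernel-verified Lean document; each statement's English description precedes it below -/
import Mathlib

section
/- Let (X₁, X₂) be a centered Gaussian random vector where X₁ and X₂ are standard Gaussian with correlation ρ ∈ [-1,1], and let α₂, α₃ > 0. Then E[|X₁|^{α₂} |X₂|^{α₃}] = E[|X₁|^{α₂}] E[|X₂|^{α₃}] · F(-α₂/2, -α₃/2; 1/2; ρ²), where F is the Gauss hypergeometric function. -/
open MeasureTheory Matrix

noncomputable def risingFactorial (x : ℝ) (n : ℕ) : ℝ :=
  ∏ k ∈ Finset.range n, (x + k)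

noncomputable def gaussHypergeometric (a b c z : ℝ) : ℝ :=
  ∑' n : ℕ,
    risingFactorial a n * risingFactorial b n /
      (risingFactorial c n * (Nat.factorial n : ℝ)) * z ^ n

lemma rf_zero (x : ℝ) : risingFactorial x 0 = 1 := by simp [risingFactorial]
lemma rf_succ (x : ℝ) (n : ℕ) : risingFactorial x (n+1) = risingFactorial x n * (x + n) := by
  simp [risingFactorial, Finset.prod_range_succ]
lemma rf_pos {x : ℝ} (hx : 0 < x) (n : ℕ) : 0 < risingFactorial x n :=
  Finset.prod_pos fun k _ => by positivity

noncomputable def hypTerm (a b c : ℝ) (n : ℕ) : ℝ :=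
  risingFactorial a n * risingFactorial b n / (risingFactorial c n * (Nat.factorial n : ℝ))

lemma hypTerm_succ (a b : ℝ) {c : ℝ} (hc : 0 < c) (n : ℕ) :
    hypTerm a b c (n+1) * ((c + n) * (n + 1)) = hypTerm a b c n * ((a + n) * (b + n)) := by
  have h1 := (rf_pos hc n).ne'
  have h2 : c + n ≠ 0 := by positivity
  have h3 : (n.factorial : ℝ) ≠ 0 := by positivity
  have h4 : (n : ℝ) + 1 ≠ 0 := by positivity
  unfold hypTerm
  rw [rf_succ, rf_succ, rf_succ, Nat.factorial_succ]
  push_cast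
  field_simp

noncomputable def binTerm (e : ℝ) (n : ℕ) : ℝ := risingFactorial e n / n.factorial

lemma binTerm_succ (e : ℝ) (n : ℕ) : binTerm e (n+1) * (n+1) = binTerm e n * (e + n) := by
  have h3 : (n.factorial : ℝ) ≠ 0 := by positivity
  have h4 : (n : ℝ) + 1 ≠ 0 := by positivity
  unfold binTerm
  rw [rf_succ, Nat.factorial_succ]
  push_cast
  field_simp

lemma saalschutz_rec (a b : ℝ) {c : ℝ} (hc : 0 < c) (n : ℕ) :
    (∑ k ∈ Finset.range (n+2), hypTerm a b c k * binTerm (c-a-b) (n+1-k)) * ((c+n)*(n+1))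
    = (∑ k ∈ Finset.range (n+1), hypTerm a b c k * binTerm (c-a-b) (n-k)) *
      ((c-a+n)*(c-b+n)) := by
  set e := c - a - b with he
  let G : ℕ → ℝ := fun k => - (k * (c + k - 1) * hypTerm a b c k * binTerm e (n+1-k))
  have key : ∀ k ∈ Finset.range (n+1),
      hypTerm a b c k * binTerm e (n+1-k) * ((c+n)*(n+1)) -
      hypTerm a b c k * binTerm e (n-k) * ((c-a+n)*(c-b+n)) = G (k+1) - G k := by
    intro k hk
    obtain ⟨m, rfl⟩ : ∃ m, n = k + m := ⟨n - k, by simp at hk; omega⟩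
    have e1 : k + m + 1 - k = m + 1 := by omega
    have e2 : k + m - k = m := by omega
    have e3 : k + m + 1 - (k + 1) = m := by omega
    have h4 : (m : ℝ) + 1 ≠ 0 := by positivity
    have hu := hypTerm_succ a b hc k
    have hp := binTerm_succ e m
    simp only [G, e1, e2, e3]
    have hp2 : binTerm e (m+1) = binTerm e m * (e + m) / (m+1) := by
      field_simp; linarith
    have hu2 : ((k+1 : ℕ):ℝ) * (c + ((k+1:ℕ):ℝ) - 1) * hypTerm a b c (k+1) = 
       hypTerm a b c k * ((a + k) * (b + k)) := by rw [← hu]; push_cast; ring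
    rw [hu2, hp2, he]
    push_cast
    field_simp
    ring
  have tel := Finset.sum_congr rfl key
  rw [Finset.sum_range_sub, Finset.sum_sub_distrib, ← Finset.sum_mul, ← Finset.sum_mul] at tel
  rw [Finset.sum_range_succ]
  simp only [G, Nat.sub_self] at tel ⊢
  push_cast at tel
  linear_combination tel

lemma saalschutz (a b : ℝ) {c : ℝ} (hc : 0 < c) (n : ℕ) :
    ∑ k ∈ Finset.range (n+1), hypTerm a b c k * binTerm (c-a-b) (n-k) =
      hypTerm (c-a) (c-b) c n := by
  induction n with
  | zero => simp [hypTerm, binTerm, rf_zero]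
  | succ n ih =>
    have h2 : (c + n) * ((n:ℝ) + 1) ≠ 0 := by positivity
    apply mul_right_cancel₀ h2
    rw [saalschutz_rec a b hc, ih, hypTerm_succ _ _ hc]

lemma hypTerm_summable (a b : ℝ) {c : ℝ} (hc : 0 < c) {z : ℝ} (hz : |z| < 1) :
    Summable fun n => ‖hypTerm a b c n * z ^ n‖ := by
  obtain ⟨r, hr1, hr2⟩ := exists_between hz
  have lim : Filter.Tendsto (fun n : ℕ => |(a+n)*(b+n)/((c+n)*(n+1)) * z|) Filter.atTop (nhds |z|) := by
    have h1 : ∀ x y : ℝ, Filter.Tendsto (fun n : ℕ => (x + n)/(y+n)) Filter.atTop (nhds 1) := by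
      intro x y
      have h := tendsto_add_mul_div_add_mul_atTop_nhds x y (1:ℝ) (one_ne_zero)
      simpa using h
    have h2 := (((h1 a c).mul (h1 b 1)).mul_const z).abs
    simp only [one_mul] at h2
    refine h2.congr fun n => ?_
    rw [div_mul_div_comm, add_comm 1 (n:ℝ)]
  refine summable_of_ratio_norm_eventually_le hr2 ?_
  filter_upwards [lim.eventually_le_const hr1] with n hn
  have h2 : (c + n) * ((n:ℝ) + 1) ≠ 0 := by positivity
  have : hypTerm a b c (n+1) * z ^ (n+1) = ((a+n)*(b+n)/((c+n)*(n+1)) * z) * (hypTerm a b c n * z ^ n) := by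
    have h5 := hypTerm_succ a b hc n
    rw [← eq_div_iff h2] at h5
    rw [h5, pow_succ]
    ring
  rw [norm_norm, norm_norm, this, norm_mul]
  exact mul_le_mul_of_nonneg_right hn (norm_nonneg _)

lemma binTerm_eq (e : ℝ) (n : ℕ) : Ring.choose (e + n - 1) n = binTerm e n := by
  have h3 : (n.factorial : ℝ) ≠ 0 := by positivity
  have := Ring.factorial_nsmul_multichoose_eq_ascPochhammer e n
  rw [← Ring.multichoose_eq, binTerm, eq_div_iff h3]
  rw [nsmul_eq_mul, mul_comm] at this
  rw [this, Polynomial.ascPochhammer_smeval_eq_eval]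
  clear this h3
  induction n with
  | zero => simp [rf_zero]
  | succ n ih =>
    rw [rf_succ, ascPochhammer_succ_eval, ih]

lemma binTerm_hasSum (e : ℝ) {z : ℝ} (hz : |z| < 1) :
    HasSum (fun n => binTerm e n * z ^ n) (1 / (1 - z) ^ e) := by
  have h := (Real.one_div_one_sub_rpow_hasFPowerSeriesOnBall_zero e).hasSum (y := z)
    (by simp [enorm_eq_nnnorm]; exact_mod_cast hz)
  simp at h
  simp only [binTerm_eq] at h
  simpa [mul_comm] using h

lemma euler (a b : ℝ) {c : ℝ} (hc : 0 < c) {z : ℝ} (hz : |z| < 1) :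
    ∑' n, hypTerm a b c n * z ^ n =
      (1 - z) ^ (c-a-b) * ∑' n, hypTerm (c-a) (c-b) c n * z ^ n := by
  have hp : 0 < (1 - z) ^ (c-a-b) := Real.rpow_pos_of_pos (by linarith [(abs_lt.1 hz).2]) _
  have hb := binTerm_hasSum (c-a-b) hz
  have h := tsum_mul_tsum_eq_tsum_sum_range_of_summable_norm (hypTerm_summable a b hc hz)
    hb.summable.norm
  rw [hb.tsum_eq] at h
  have : ∀ n, ∑ k ∈ Finset.range (n + 1), hypTerm a b c k * z ^ k * (binTerm (c - a - b) (n - k) * z ^ (n - k)) = hypTerm (c-a) (c-b) c n * z ^ n := by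
    intro n
    rw [← saalschutz a b hc, Finset.sum_mul]
    refine Finset.sum_congr rfl fun k hk => ?_
    have : z ^ n = z ^ k * z ^ (n-k) := by rw [← pow_add]; congr 1; simp at hk; omega
    rw [this]; ring
  simp only [this] at h
  rw [← h]
  field_simp

lemma fact_two_mul (n : ℕ) :
    ((2 * n).factorial : ℝ) = 4 ^ n * (risingFactorial (1/2) n * n.factorial) := by
  induction n with
  | zero => simp [rf_zero]
  | succ n ih =>
    rw [show 2 * (n+1) = 2 * n + 1 + 1 by ring, Nat.factorial_succ, Nat.factorial_succ,
      Nat.factorial_succ, rf_succ]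
    push_cast
    rw [ih]
    ring

noncomputable def gInt (b q : ℝ) : ℝ := ∫ x : ℝ, |x| ^ q * Real.exp (-b * x ^ 2)

lemma gInt_eq {b q : ℝ} (hb : 0 < b) (hq : 0 ≤ q) :
    gInt b q = b ^ (-(q+1)/2) * Real.Gamma ((q+1)/2) := by
  have h := integral_comp_abs (f := fun x => x ^ q * Real.exp (-b * x ^ 2))
  simp only [sq_abs] at h
  rw [gInt, h]
  have h2 := integral_rpow_mul_exp_neg_mul_rpow (p := 2) (q := q) (b := b) (by norm_num)
    (by linarith) hb
  simp only [Real.rpow_two] at h2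
  rw [h2]
  ring

lemma gInt_pos {b q : ℝ} (hb : 0 < b) (hq : 0 ≤ q) : 0 < gInt b q := by
  rw [gInt_eq hb hq]
  have := Real.Gamma_pos_of_pos (s := (q+1)/2) (by linarith)
  positivity

lemma gInt_integrable {b q : ℝ} (hb : 0 < b) (hq : 0 ≤ q) :
    Integrable (fun x : ℝ => |x| ^ q * Real.exp (-b * x ^ 2)) :=
  Integrable.of_integral_ne_zero (gInt_pos hb hq).ne'

lemma gInt_shift {b q : ℝ} (hb : 0 < b) (hq : 0 ≤ q) (n : ℕ) :
    gInt b (q + 2 * n) = (b⁻¹) ^ n * risingFactorial ((q+1)/2) n * gInt b q := by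
  induction n with
  | zero => simp [rf_zero]
  | succ n ih =>
    have h0 : 0 ≤ q + 2 * n := by positivity
    have h1 : 0 ≤ q + 2 * ((n+1 : ℕ) : ℝ) := by positivity
    have h3 : gInt b (q + 2 * ((n+1 : ℕ) : ℝ)) = b⁻¹ * ((q+1)/2 + n) * gInt b (q + 2 * n) := by
      rw [gInt_eq hb h0, gInt_eq hb h1]
      have e1 : (q + 2 * ((n+1 : ℕ) : ℝ) + 1) / 2 = (q + 2 * n + 1)/2 + 1 := by push_cast; ring
      have e2 : -(q + 2 * ((n+1 : ℕ) : ℝ) + 1) / 2 = -(q + 2 * n + 1)/2 + (-1) := by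
        push_cast; ring
      rw [e1, e2, Real.Gamma_add_one (by positivity), Real.rpow_add hb, Real.rpow_neg_one]
      ring
    rw [h3, ih, rf_succ, pow_succ]
    ring

lemma gInt_scale {v q : ℝ} (hv : 0 < v) (hq : 0 ≤ q) :
    gInt (1/(2*v)) q = v ^ ((q+1)/2) * gInt (1/2) q := by
  rw [gInt_eq (by positivity) hq, gInt_eq (by positivity) hq]
  rw [show 1/(2*v) = v⁻¹ * (1/2) by field_simp, Real.mul_rpow (by positivity) (by positivity),
    Real.inv_rpow hv.le, ← Real.rpow_neg hv.le, neg_div, neg_neg]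
  ring

/-- unnormalised joint density times powers -/
noncomputable def kern (α β v ρ : ℝ) (p : ℝ × ℝ) : ℝ :=
  (|p.1| ^ α * Real.exp (-(1/(2*v)) * p.1 ^ 2)) * (|p.2| ^ β * Real.exp (-(1/(2*v)) * p.2 ^ 2)) *
    Real.exp (ρ / v * (p.1 * p.2))

lemma kern_meas (α β v ρ : ℝ) : Measurable (kern α β v ρ) := by
  unfold kern; fun_prop

lemma kern_integrable {α β v ρ : ℝ} (hα : 0 ≤ α) (hβ : 0 ≤ β) (hv : 0 < v) (hρ : |ρ| < 1) :
    Integrable (kern α β v ρ) (volume.prod volume) := by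
  have hb : 0 < 1/(2*v) * (1 - |ρ|) := mul_pos (by positivity) (by linarith)
  refine ((gInt_integrable hb hα).mul_prod (gInt_integrable hb hβ)).mono'
    (kern_meas α β v ρ).aestronglyMeasurable (Filter.Eventually.of_forall fun p => ?_)
  obtain ⟨x, w⟩ := p
  have h0 : 0 ≤ kern α β v ρ (x, w) := by unfold kern; positivity
  rw [Real.norm_of_nonneg h0]
  simp only [kern]
  have e1 : ∀ A B C D E : ℝ, A * B * (C * D) * E = A * C * (B * D * E) := by intros; ring
  have e2 : ∀ A B C D : ℝ, A * B * (C * D) = A * C * (B * D) := by intros; ring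
  rw [e1, e2 (|x| ^ α) (Real.exp (-(1/(2*v) * (1 - |ρ|)) * x ^ 2))]
  have hp : 0 ≤ |x| ^ α * |w| ^ β := by positivity
  refine mul_le_mul_of_nonneg_left ?_ hp
  rw [← Real.exp_add, ← Real.exp_add, ← Real.exp_add, Real.exp_le_exp]
  have h3 : ρ * (x * w) ≤ |ρ| * ((x^2 + w^2)/2) := by
    calc ρ * (x * w) ≤ |ρ * (x*w)| := le_abs_self _
      _ = |ρ| * (|x| * |w|) := by rw [abs_mul, abs_mul]
      _ ≤ _ := by
        gcongr
        nlinarith [sq_abs x, sq_abs w, sq_nonneg (|x| - |w|)]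
  have h4 : ρ / v * (x*w) ≤ 1/(2*v) * (|ρ| * (x^2+w^2)) := by
    have : ρ / v * (x*w) = (1/v) * (ρ * (x*w)) := by ring
    rw [this, show 1/(2*v) * (|ρ| * (x^2+w^2)) = (1/v) * (|ρ| * ((x^2 + w^2)/2)) by field_simp]
    gcongr
  linear_combination h4

lemma kern_neg {α β v ρ : ℝ} (hα : 0 ≤ α) (hβ : 0 ≤ β) (hv : 0 < v) (hρ : |ρ| < 1) :
    ∫ p, kern α β v (-ρ) p ∂(volume.prod volume) = ∫ p, kern α β v ρ p ∂(volume.prod volume) := by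
  rw [integral_prod _ (kern_integrable hα hβ hv hρ),
    integral_prod _ (kern_integrable hα hβ hv (by simpa using hρ))]
  congr 1
  ext x
  rw [← integral_neg_eq_self]
  congr 1
  ext w
  simp only [kern, abs_neg]
  congr 2
  · simp
  · ring

lemma kern_series {α β v ρ : ℝ} (hα : 0 ≤ α) (hβ : 0 ≤ β) (hv : 0 < v) (hρ : |ρ| < 1) :
    ∫ p, kern α β v ρ p ∂(volume.prod volume) =
      gInt (1/(2*v)) α * gInt (1/(2*v)) β *
        ∑' n, hypTerm ((α+1)/2) ((β+1)/2) (1/2) n * (ρ^2) ^ n := by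
  have hb : 0 < 1/(2*v) := by positivity
  set b := 1/(2*v) with hbd
  let F : ℕ → ℝ × ℝ → ℝ := fun n p => ((ρ/v)^(2*n) / ((2*n).factorial : ℝ)) *
    ((|p.1| ^ (α + 2*n) * Real.exp (-b * p.1^2)) * (|p.2| ^ (β + 2*n) * Real.exp (-b * p.2^2)))
  have hFint : ∀ n, Integrable (F n) (volume.prod volume) := fun n =>
    ((gInt_integrable hb (by positivity)).mul_prod (gInt_integrable hb (by positivity))).const_mul _
  have hFnn : ∀ n p, 0 ≤ F n p := by
    intro n p
    have : 0 ≤ (ρ/v)^(2*n) := by rw [pow_mul]; positivity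
    simp only [F]; positivity
  have hFval : ∀ n, ∫ p, F n p ∂(volume.prod volume) =
      gInt b α * gInt b β * (hypTerm ((α+1)/2) ((β+1)/2) (1/2) n * (ρ^2)^n) := by
    intro n
    simp only [F]
    rw [integral_const_mul, integral_prod_mul (fun x : ℝ => |x| ^ (α + 2*n) * Real.exp (-b * x^2))
      (fun x : ℝ => |x| ^ (β + 2*n) * Real.exp (-b * x^2))]
    change _ * (gInt b (α + 2*n) * gInt b (β + 2 * n)) = _
    rw [gInt_shift hb hα, gInt_shift hb hβ, fact_two_mul, hypTerm]
    have h1 := (rf_pos (x := 1/2) (by norm_num) n).ne'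
    have h3 : (n.factorial : ℝ) ≠ 0 := by positivity
    have h5 : b⁻¹ ^ n * b⁻¹ ^ n * (ρ/v)^(2*n) = 4^n * (ρ^2)^n := by
      rw [pow_mul, ← mul_pow, ← mul_pow, ← mul_pow, hbd]
      congr 1
      field_simp
      ring
    have h6 : (4:ℝ)^n ≠ 0 := by positivity
    have h7 : ∀ K r1 r2 g1 g2 B : ℝ, K * (B * r1 * g1 * (B * r2 * g2)) = (B*B*K) * (r1*r2*g1*g2) := by
      intros; ring
    rw [div_mul_eq_mul_div, h7, h5]
    field_simp
  have hz : |ρ^2| < 1 := by rw [abs_pow]; exact pow_lt_one₀ (abs_nonneg _) hρ (by norm_num)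
  have hsum := hypTerm_summable ((α+1)/2) ((β+1)/2) (c := 1/2) (by norm_num) hz
  have H := hasSum_integral_of_summable_integral_norm (F := F) hFint (by
    simp only [Real.norm_of_nonneg (hFnn _ _), hFval]
    exact hsum.of_norm.mul_left _)
  simp only [hFval] at H
  have H2 := H.unique (hsum.of_norm.hasSum.mul_left (gInt b α * gInt b β))
  rw [← H2]
  have hsymm : ∫ p, kern α β v ρ p ∂(volume.prod volume) =
      ∫ p, (kern α β v ρ p + kern α β v (-ρ) p)/2 ∂(volume.prod volume) := by
    rw [integral_div, integral_add (kern_integrable hα hβ hv hρ)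
      (kern_integrable hα hβ hv (by simpa using hρ)), kern_neg hα hβ hv hρ]
    ring
  rw [hsymm]
  refine integral_congr_ae ?_
  have hne : ∀ᵐ p : ℝ × ℝ ∂(volume.prod volume), p.1 ≠ 0 ∧ p.2 ≠ 0 := by
    have h0 : ∀ᵐ x : ℝ, x ≠ 0 := by simp [ae_iff]
    have h1 : ∀ᵐ p : ℝ × ℝ ∂(volume.prod volume), p.1 ≠ 0 :=
      Measure.quasiMeasurePreserving_fst.ae h0
    have h2 : ∀ᵐ p : ℝ × ℝ ∂(volume.prod volume), p.2 ≠ 0 :=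
      Measure.quasiMeasurePreserving_snd.ae h0
    exact h1.and h2
  filter_upwards [hne] with p hp
  obtain ⟨x, w⟩ := p
  obtain ⟨hx, hw⟩ := hp
  have hc := (Real.hasSum_cosh (ρ/v * (x*w))).mul_left
    ((|x| ^ α * Real.exp (-b * x ^ 2)) * (|w| ^ β * Real.exp (-b * w ^ 2)))
  have he : (fun n => F n (x,w)) = fun n => ((|x| ^ α * Real.exp (-b * x ^ 2)) *
      (|w| ^ β * Real.exp (-b * w ^ 2))) * ((ρ/v * (x*w)) ^ (2*n) / ((2*n).factorial : ℝ)) := by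
    ext n
    have hp : ∀ (q y : ℝ), y ≠ 0 → |y| ^ (q + 2 * n) = |y| ^ q * y ^ (2*n) := by
      intro q y hy
      rw [Real.rpow_add (abs_pos.2 hy), show (2 * (n:ℝ)) = ((2 * n : ℕ) : ℝ) by push_cast; ring,
        Real.rpow_natCast, pow_mul |y|, sq_abs, ← pow_mul]
    simp only [F]
    rw [hp α x hx, hp β w hw, mul_pow, mul_pow]
    ring
  rw [he, hc.tsum_eq]
  simp only [kern, Real.cosh_eq, hbd]
  rw [show -ρ / v * (x*w) = -(ρ / v * (x*w)) by ring]
  ring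

open ProbabilityTheory in
/-- absolute moment of the standard Gaussian -/
noncomputable def gMom (q : ℝ) : ℝ := ∫ x : ℝ, |x| ^ q ∂(gaussianReal 0 1)

lemma gMom_eq (q : ℝ) : gMom q = (√(2 * Real.pi))⁻¹ * gInt (1/2) q := by
  rw [gMom, ProbabilityTheory.integral_gaussianReal_eq_integral_smul one_ne_zero, gInt,
    ← integral_const_mul]
  congr 1
  ext x
  simp only [ProbabilityTheory.gaussianPDFReal, smul_eq_mul, NNReal.coe_one, mul_one, sub_zero]
  rw [show -x^2/2 = -(1/2) * x^2 by ring]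
  ring

lemma gMom_pos {q : ℝ} (hq : 0 ≤ q) : 0 < gMom q := by
  rw [gMom_eq]
  have := gInt_pos (b := 1/2) (by norm_num) hq
  positivity

open ProbabilityTheory in
lemma gMom_integrable {q : ℝ} (hq : 0 ≤ q) :
    Integrable (fun x : ℝ => |x| ^ q) (gaussianReal 0 1) :=
  Integrable.of_integral_ne_zero (gMom_pos hq).ne'

open ProbabilityTheory in
/-- joint moment in the model -/
noncomputable def jMom (α β s t : ℝ) : ℝ :=
  ∫ p : ℝ × ℝ, |p.1| ^ α * |s * p.1 + t * p.2| ^ β ∂((gaussianReal 0 1).prod (gaussianReal 0 1))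

noncomputable def jBound (α β : ℝ) (p : ℝ × ℝ) : ℝ :=
  2 ^ β * (|p.1| ^ (α + β) * 1 + |p.1| ^ α * |p.2| ^ β)

open ProbabilityTheory in
lemma jBound_integrable {α β : ℝ} (hα : 0 < α) (hβ : 0 < β) :
    Integrable (jBound α β) ((gaussianReal 0 1).prod (gaussianReal 0 1)) := by
  refine Integrable.const_mul (Integrable.add ?_ ?_) _
  · exact (gMom_integrable (by positivity)).mul_prod (g := fun _ => (1:ℝ)) (integrable_const _)
  · exact (gMom_integrable hα.le).mul_prod (gMom_integrable hβ.le)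

lemma jBound_le {α β s t : ℝ} (hα : 0 < α) (hβ : 0 < β) (hs : |s| ≤ 1) (ht : |t| ≤ 1)
    (p : ℝ × ℝ) : ‖|p.1| ^ α * |s * p.1 + t * p.2| ^ β‖ ≤ jBound α β p := by
  obtain ⟨x, y⟩ := p
  rw [Real.norm_of_nonneg (by positivity), jBound]
  simp only
  have h1 : |s * x + t * y| ≤ 2 * max |x| |y| := by
    calc |s * x + t * y| ≤ |s * x| + |t * y| := abs_add_le _ _
      _ = |s| * |x| + |t| * |y| := by rw [abs_mul, abs_mul]
      _ ≤ 1 * |x| + 1 * |y| := by gcongr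
      _ ≤ _ := by linarith [le_max_left |x| |y|, le_max_right |x| |y|]
  have h2 : |s * x + t * y| ^ β ≤ 2 ^ β * (|x| ^ β + |y| ^ β) := by
    calc |s * x + t * y| ^ β ≤ (2 * max |x| |y|) ^ β := by gcongr
      _ = 2 ^ β * (max |x| |y|) ^ β := Real.mul_rpow (by norm_num) (by positivity)
      _ ≤ _ := by
        gcongr
        have hx : 0 ≤ |x| ^ β := by positivity
        have hy : 0 ≤ |y| ^ β := by positivity
        rcases max_cases |x| |y| with h | h <;> rw [h.1] <;> linarith
  calc |x| ^ α * |s * x + t * y| ^ β ≤ |x| ^ α * (2 ^ β * (|x| ^ β + |y| ^ β)) := by gcongr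
    _ = _ := by
      rw [Real.rpow_add_of_nonneg (abs_nonneg x) hα.le hβ.le]; ring

open ProbabilityTheory in
lemma jMom_integrable {α β s t : ℝ} (hα : 0 < α) (hβ : 0 < β) (hs : |s| ≤ 1) (ht : |t| ≤ 1) :
    Integrable (fun p : ℝ × ℝ => |p.1| ^ α * |s * p.1 + t * p.2| ^ β)
      ((gaussianReal 0 1).prod (gaussianReal 0 1)) :=
  (jBound_integrable hα hβ).mono' (by fun_prop)
    (Filter.Eventually.of_forall fun p => jBound_le hα hβ hs ht p)

open ProbabilityTheory in
lemma inner_eq {v : ℝ} (hv : 0 < v) (m β : ℝ) :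
    ∫ y, |m + √v * y| ^ β ∂(gaussianReal 0 1) =
      ∫ w, (√(2 * Real.pi * v))⁻¹ * Real.exp (-(w - m) ^ 2 / (2 * v)) * |w| ^ β := by
  have h1 : (gaussianReal 0 1).map (fun y => m + √v * y) = gaussianReal m (Real.toNNReal v) := by
    have : (fun y : ℝ => m + √v * y) = (fun y => m + y) ∘ (fun y => √v * y) := rfl
    rw [this, ← Measure.map_map (by fun_prop) (by fun_prop), gaussianReal_map_const_mul,
      gaussianReal_map_const_add]
    congr 1
    · simp
    · ext; simp [Real.sq_sqrt hv.le, hv.le]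
  have hv0 : Real.toNNReal v ≠ 0 := by simpa using hv
  have h2 := integral_map (μ := gaussianReal 0 1) (φ := fun y => m + √v * y)
    (f := fun w : ℝ => |w| ^ β) (by fun_prop)
    (Measurable.aestronglyMeasurable (by fun_prop))
  rw [← h2, h1, integral_gaussianReal_eq_integral_smul hv0]
  simp [gaussianPDFReal, hv.le]

open ProbabilityTheory in
lemma jMom_lt {α β ρ : ℝ} (hα : 0 < α) (hβ : 0 < β) (hρ : |ρ| < 1) :
    jMom α β ρ √(1 - ρ^2) = gMom α * gMom β *
      ∑' n, hypTerm (-α/2) (-β/2) (1/2) n * (ρ^2) ^ n := by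
  have hz : |ρ^2| < 1 := by rw [abs_pow]; exact pow_lt_one₀ (abs_nonneg _) hρ (by norm_num)
  have hv : 0 < 1 - ρ^2 := by linarith [(abs_lt.1 hz).2]
  have hs : |√(1-ρ^2)| ≤ 1 := by
    rw [abs_of_nonneg (Real.sqrt_nonneg _)]
    exact Real.sqrt_le_one.2 (by nlinarith [sq_nonneg ρ])
  rw [jMom, integral_prod _ (jMom_integrable hα hβ hρ.le hs),
    integral_gaussianReal_eq_integral_smul one_ne_zero]
  set v := 1 - ρ^2 with hvd
  have step : ∫ x, gaussianPDFReal 0 1 x •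
      ∫ y, |x| ^ α * |ρ * x + √v * y| ^ β ∂(gaussianReal 0 1) =
      ((√(2*Real.pi))⁻¹ * (√(2*Real.pi * v))⁻¹) *
        ∫ p, kern α β v ρ p ∂(volume.prod volume) := by
    rw [integral_prod _ (kern_integrable hα.le hβ.le hv hρ), ← integral_const_mul]
    congr 1
    ext x
    rw [integral_const_mul, inner_eq hv, smul_eq_mul, ← integral_const_mul, ← integral_const_mul,
      ← integral_const_mul]
    congr 1
    ext w
    simp only [kern, gaussianPDFReal, NNReal.coe_one, mul_one, sub_zero]
    have e1 : Real.exp (-x^2/2) * Real.exp (-(w - ρ * x) ^ 2 / (2 * v)) =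
        Real.exp (-(1/(2*v)) * x ^ 2) * Real.exp (-(1/(2*v)) * w ^ 2) *
          Real.exp (ρ / v * (x * w)) := by
      rw [← Real.exp_add, ← Real.exp_add, ← Real.exp_add]
      congr 1
      field_simp
      rw [hvd]
      ring
    linear_combination ((√(2*Real.pi))⁻¹ * (√(2*Real.pi * v))⁻¹ * |x|^α * |w|^β) * e1
  rw [step, kern_series hα.le hβ.le hv hρ, euler (-α/2) (-β/2) (by norm_num) hz,
    gInt_scale hv hα.le, gInt_scale hv hβ.le, gMom_eq, gMom_eq, ← hvd,
    Real.sqrt_mul (x := 2 * Real.pi) (by positivity) v]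
  rw [show (1/2 - -α/2 : ℝ) = (α+1)/2 by ring, show (1/2 - -β/2 : ℝ) = (β+1)/2 by ring,
    show ((α+1)/2 - -β/2 : ℝ) = (α+1)/2 + (β+1)/2 + -(1/2) by ring, Real.rpow_add hv,
    Real.rpow_add hv, Real.rpow_neg hv.le, ← Real.sqrt_eq_rpow, mul_inv]
  ring

lemma summable_of_abel {f : ℕ → ℝ} {N : ℕ} (hf : ∀ n, 0 ≤ f (n + N))
    (hs : ∀ r : ℝ, 0 ≤ r → r < 1 → Summable fun n => f n * r ^ n) {L : ℝ}
    (hL : Filter.Tendsto (fun r : ℝ => ∑' n, f n * r ^ n) (nhdsWithin 1 (Set.Iio 1)) (nhds L)) :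
    Summable f := by
  rw [← summable_nat_add_iff N]
  refine summable_of_sum_range_le (c := L - ∑ n ∈ Finset.range N, f n) hf fun M => ?_
  have h1 : ∀ S : Finset ℕ, ∀ g : ℕ → ℕ, Filter.Tendsto (fun r : ℝ => ∑ n ∈ S, f (g n) * r ^ (g n))
      (nhdsWithin 1 (Set.Iio 1)) (nhds (∑ n ∈ S, f (g n))) := by
    intro S g
    have hc : Continuous fun r : ℝ => ∑ n ∈ S, f (g n) * r ^ (g n) := by fun_prop
    have := (hc.tendsto 1).mono_left (nhdsWithin_le_nhds (s := Set.Iio 1))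
    simpa using this
  refine le_of_tendsto_of_tendsto (h1 (Finset.range M) (fun n => n + N))
    (hL.sub (h1 (Finset.range N) id)) ?_
  have hpos : ∀ᶠ r : ℝ in nhdsWithin 1 (Set.Iio 1), r ∈ Set.Ioo 0 1 :=
    Ioo_mem_nhdsLT (by norm_num)
  filter_upwards [hpos] with r hr
  have hsr := hs r hr.1.le hr.2
  have := hsr.sum_add_tsum_nat_add N
  simp only [id]
  rw [← this, add_sub_cancel_left]
  refine Summable.sum_le_tsum _ (fun n _ => ?_) ((summable_nat_add_iff N).2 hsr)
  exact mul_nonneg (hf n) (pow_nonneg hr.1.le _)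

lemma hypTerm_sign (a b : ℝ) {c : ℝ} (hc : 0 < c) :
    ∃ N : ℕ, (∀ n, 0 ≤ hypTerm a b c (n + N)) ∨ (∀ n, 0 ≤ - hypTerm a b c (n + N)) := by
  obtain ⟨N, hN⟩ := exists_nat_gt (max (-a) (-b))
  have ha : -a < N := lt_of_le_of_lt (le_max_left _ _) hN
  have hb : -b < N := lt_of_le_of_lt (le_max_right _ _) hN
  refine ⟨N, ?_⟩
  have key : ∀ n, ∃ q, 0 ≤ q ∧ hypTerm a b c (n + N) = q * hypTerm a b c N := by
    intro n
    induction n with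
    | zero => exact ⟨1, by norm_num, by simp⟩
    | succ n ih =>
      obtain ⟨q, hq, h⟩ := ih
      have h5 := hypTerm_succ a b hc (n + N)
      have h2 : (c + (n + N : ℕ)) * (((n + N : ℕ):ℝ) + 1) ≠ 0 := by positivity
      rw [← eq_div_iff h2, h] at h5
      have hn : (0:ℝ) ≤ n := by positivity
      have ha2 : 0 ≤ a + (n + N : ℕ) := by push_cast; linarith
      have hb2 : 0 ≤ b + (n + N : ℕ) := by push_cast; linarith
      refine ⟨q * ((a + (n + N : ℕ)) * (b + (n + N : ℕ))) /
        ((c + (n + N : ℕ)) * (((n + N : ℕ):ℝ) + 1)), by positivity, ?_⟩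
      rw [show n + 1 + N = n + N + 1 by ring, h5]
      ring
  rcases le_total 0 (hypTerm a b c N) with h | h
  · left
    intro n
    obtain ⟨q, hq, e⟩ := key n
    rw [e]; positivity
  · right
    intro n
    obtain ⟨q, hq, e⟩ := key n
    rw [e]
    nlinarith

open ProbabilityTheory in
lemma jMom_tendsto {α β : ℝ} (hα : 0 < α) (hβ : 0 < β) :
    Filter.Tendsto (fun r : ℝ => jMom α β √r √(1 - r)) (nhdsWithin 1 (Set.Iio 1))
      (nhds (jMom α β 1 0)) := by
  unfold jMom
  refine tendsto_integral_filter_of_dominated_convergence (jBound α β) ?_ ?_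
    (jBound_integrable hα hβ) ?_
  · exact Filter.Eventually.of_forall fun r =>
      Measurable.aestronglyMeasurable (by fun_prop)
  · have hpos : ∀ᶠ r : ℝ in nhdsWithin 1 (Set.Iio 1), r ∈ Set.Ioo 0 1 :=
      Ioo_mem_nhdsLT (by norm_num)
    filter_upwards [hpos] with r hr
    refine Filter.Eventually.of_forall fun p => jBound_le hα hβ ?_ ?_ p
    · rw [abs_of_nonneg (Real.sqrt_nonneg _)]
      exact Real.sqrt_le_one.2 hr.2.le
    · rw [abs_of_nonneg (Real.sqrt_nonneg _)]
      exact Real.sqrt_le_one.2 (by linarith [hr.1])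
  · refine Filter.Eventually.of_forall fun p => ?_
    have hc : Continuous fun r : ℝ => |p.1| ^ α * |√r * p.1 + √(1 - r) * p.2| ^ β := by
      refine Continuous.mul continuous_const (Continuous.rpow_const (by fun_prop) ?_)
      intro x; right; exact hβ.le
    have := (hc.tendsto 1).mono_left (nhdsWithin_le_nhds (s := Set.Iio 1))
    simpa using this

lemma jMom_one {α β : ℝ} (hα : 0 < α) (hβ : 0 < β) :
    jMom α β 1 0 = gMom α * gMom β * ∑' n, hypTerm (-α/2) (-β/2) (1/2) n := by
  have hM : gMom α * gMom β ≠ 0 := (mul_pos (gMom_pos hα.le) (gMom_pos hβ.le)).ne'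
  have hpos : ∀ᶠ r : ℝ in nhdsWithin 1 (Set.Iio 1), r ∈ Set.Ioo 0 1 :=
      Ioo_mem_nhdsLT (by norm_num)
  have hL : Filter.Tendsto (fun r : ℝ => ∑' n, hypTerm (-α/2) (-β/2) (1/2) n * r ^ n)
      (nhdsWithin 1 (Set.Iio 1)) (nhds (jMom α β 1 0 / (gMom α * gMom β))) := by
    refine ((jMom_tendsto hα hβ).div_const _).congr' ?_
    filter_upwards [hpos] with r hr
    have h1 : √r ^ 2 = r := Real.sq_sqrt hr.1.le
    have h := jMom_lt (ρ := √r) hα hβ (by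
      rw [abs_of_nonneg (Real.sqrt_nonneg _), Real.sqrt_lt' one_pos]; simpa using hr.2)
    rw [h1] at h
    rw [h, mul_div_cancel_left₀ _ hM]
  have hs : ∀ r : ℝ, 0 ≤ r → r < 1 → Summable fun n => hypTerm (-α/2) (-β/2) (1/2) n * r ^ n :=
    fun r h0 h1 => (hypTerm_summable _ _ (by norm_num) (by rwa [abs_of_nonneg h0])).of_norm
  have hsum : Summable (hypTerm (-α/2) (-β/2) (1/2)) := by
    obtain ⟨N, h | h⟩ := hypTerm_sign (-α/2) (-β/2) (c := 1/2) (by norm_num)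
    · exact summable_of_abel h hs hL
    · rw [← summable_neg_iff]
      refine summable_of_abel (f := -hypTerm (-α/2) (-β/2) (1/2)) h (fun r h0 h1 => ?_)
        (L := -(jMom α β 1 0 / (gMom α * gMom β))) ?_
      · simpa using (hs r h0 h1).neg
      · simpa [tsum_neg] using hL.neg
  have hA := Real.tendsto_tsum_powerSeries_nhdsWithin_lt hsum.hasSum.tendsto_sum_nat
  have := tendsto_nhds_unique hL hA
  rw [← this, mul_div_cancel₀ _ hM]

lemma jMom_formula {α β ρ : ℝ} (hα : 0 < α) (hβ : 0 < β) (hρ : ρ ∈ Set.Icc (-1:ℝ) 1) :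
    jMom α β ρ √(1 - ρ^2) = gMom α * gMom β * gaussHypergeometric (-α/2) (-β/2) (1/2) (ρ^2) := by
  change _ = _ * ∑' n, hypTerm (-α/2) (-β/2) (1/2) n * (ρ^2) ^ n
  rcases lt_or_eq_of_le (abs_le.2 hρ) with h | h
  · exact jMom_lt hα hβ h
  · have h2 : ρ ^ 2 = 1 := by rw [← sq_abs, h]; norm_num
    rw [h2]
    simp only [one_pow, mul_one, sub_self, Real.sqrt_zero]
    rw [← jMom_one hα hβ]
    unfold jMom
    simp [abs_mul, h]

open ProbabilityTheory in
lemma law_joint {Ω : Type*} [MeasurableSpace Ω] (μ : Measure Ω) [IsProbabilityMeasure μ]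
    (X : Ω → (Fin 2 → ℝ)) (hXm : Measurable X)
    (ρ : ℝ) (hρ : ρ ∈ Set.Icc (-1 : ℝ) 1)
    (hGauss : ∀ u : Fin 2 → ℝ,
      ∫ ω, Complex.exp (Complex.I * ((u ⬝ᵥ X ω : ℝ) : ℂ)) ∂μ =
        Complex.exp (-(((u ⬝ᵥ (!![1, ρ; ρ, 1]) *ᵥ u : ℝ) : ℂ)) / 2)) :
    μ.map X = ((gaussianReal 0 1).prod (gaussianReal 0 1)).map
      (fun p : ℝ × ℝ => ![p.1, ρ * p.1 + √(1 - ρ^2) * p.2]) := by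
  have hm : Measurable (fun p : ℝ × ℝ => ![p.1, ρ * p.1 + √(1 - ρ^2) * p.2]) := by
    rw [measurable_pi_iff]
    intro i
    fin_cases i <;> simp <;> fun_prop
  have hv : 0 ≤ 1 - ρ^2 := by nlinarith [hρ.1, hρ.2]
  have := Measure.isProbabilityMeasure_map (μ := μ) hXm.aemeasurable
  have := Measure.isProbabilityMeasure_map (μ := (gaussianReal 0 1).prod (gaussianReal 0 1))
    hm.aemeasurable
  apply Measure.ext_of_charFunDual
  ext L
  set u : Fin 2 → ℝ := fun i => L (Pi.single i 1) with hu
  have hL : ∀ x, L x = u ⬝ᵥ x := by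
    intro x
    conv_lhs => rw [pi_eq_sum_univ' x]
    simp [map_sum, dotProduct, hu, mul_comm]
  rw [charFunDual_apply, charFunDual_apply, integral_map hXm.aemeasurable (by fun_prop),
    integral_map hm.aemeasurable (by fun_prop)]
  simp only [hL]
  have h1 := hGauss u
  simp only [mul_comm Complex.I] at h1
  rw [h1]
  have h2 : ∀ p : ℝ × ℝ, Complex.exp (((u ⬝ᵥ ![p.1, ρ * p.1 + √(1 - ρ^2) * p.2] : ℝ) : ℂ) * Complex.I)
      = Complex.exp (((u 0 + u 1 * ρ : ℝ) : ℂ) * (p.1 : ℂ) * Complex.I) *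
        Complex.exp (((u 1 * √(1 - ρ^2) : ℝ) : ℂ) * (p.2 : ℂ) * Complex.I) := by
    intro p
    rw [← Complex.exp_add]
    congr 1
    simp [dotProduct, Fin.sum_univ_two]
    ring
  simp only [h2]
  rw [integral_prod_mul (fun x : ℝ => Complex.exp (((u 0 + u 1 * ρ : ℝ) : ℂ) * (x : ℂ) * Complex.I))
    (fun x : ℝ => Complex.exp (((u 1 * √(1 - ρ^2) : ℝ) : ℂ) * (x : ℂ) * Complex.I)),
    ← charFun_apply_real, ← charFun_apply_real, charFun_gaussianReal, charFun_gaussianReal,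
    ← Complex.exp_add]
  congr 1
  have h3 : ((√(1 - ρ^2) : ℝ) : ℂ) ^ 2 = 1 - (ρ:ℂ)^2 := by
    rw [← Complex.ofReal_pow, Real.sq_sqrt hv]; push_cast; ring
  simp [dotProduct, Fin.sum_univ_two, mulVec]
  linear_combination ((u 1 : ℂ)^2 / 2) * h3

open ProbabilityTheory in
lemma law_marg {Ω : Type*} [MeasurableSpace Ω] (μ : Measure Ω) [IsProbabilityMeasure μ]
    (X : Ω → (Fin 2 → ℝ)) (hXm : Measurable X)
    (ρ : ℝ) (hGauss : ∀ u : Fin 2 → ℝ,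
      ∫ ω, Complex.exp (Complex.I * ((u ⬝ᵥ X ω : ℝ) : ℂ)) ∂μ =
        Complex.exp (-(((u ⬝ᵥ (!![1, ρ; ρ, 1]) *ᵥ u : ℝ) : ℂ)) / 2)) (i : Fin 2) (q : ℝ) :
    ∫ ω, |X ω i| ^ q ∂μ = gMom q := by
  have hm : Measurable (fun ω => X ω i) := by fun_prop
  have law : μ.map (fun ω => X ω i) = gaussianReal 0 1 := by
    have := Measure.isProbabilityMeasure_map (μ := μ) hm.aemeasurable
    apply Measure.ext_of_charFun
    ext t
    rw [charFun_apply_real, charFun_gaussianReal, integral_map hm.aemeasurable (by fun_prop)]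
    have h1 := hGauss (Pi.single i t)
    simp only [mul_comm Complex.I] at h1
    have e : ∀ ω, ((Pi.single i t ⬝ᵥ X ω : ℝ) : ℂ) = (t : ℂ) * (X ω i : ℂ) := by
      intro ω; simp
    simp only [e] at h1
    rw [h1]
    congr 1
    fin_cases i <;> simp <;> ring
  rw [gMom, ← law, integral_map hm.aemeasurable (Measurable.aestronglyMeasurable (by fun_prop))]

theorem nabeya_formula
    {Ω : Type*} [MeasurableSpace Ω] (μ : Measure Ω) [IsProbabilityMeasure μ]
    (X : Ω → (Fin 2 → ℝ)) (hXm : Measurable X)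
    (ρ : ℝ) (hρ : ρ ∈ Set.Icc (-1 : ℝ) 1)
    (hGauss : ∀ u : Fin 2 → ℝ,
      ∫ ω, Complex.exp (Complex.I * ((u ⬝ᵥ X ω : ℝ) : ℂ)) ∂μ =
        Complex.exp (-(((u ⬝ᵥ (!![1, ρ; ρ, 1]) *ᵥ u : ℝ) : ℂ)) / 2))
    (α₂ α₃ : ℝ) (hα₂ : 0 < α₂) (hα₃ : 0 < α₃) :
    ∫ ω, |X ω 0| ^ α₂ * |X ω 1| ^ α₃ ∂μ =
      (∫ ω, |X ω 0| ^ α₂ ∂μ) * (∫ ω, |X ω 1| ^ α₃ ∂μ) *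
        gaussHypergeometric (-α₂ / 2) (-α₃ / 2) (1 / 2) (ρ ^ 2) := by
  rw [law_marg μ X hXm ρ hGauss, law_marg μ X hXm ρ hGauss, ← jMom_formula hα₂ hα₃ hρ]
  have hm : Measurable (fun p : ℝ × ℝ => ![p.1, ρ * p.1 + √(1 - ρ^2) * p.2]) := by
    rw [measurable_pi_iff]
    intro i
    fin_cases i <;> simp <;> fun_prop
  have h1 := integral_map (μ := μ) hXm.aemeasurable
    (f := fun x : Fin 2 → ℝ => |x 0| ^ α₂ * |x 1| ^ α₃)
    (Measurable.aestronglyMeasurable (by fun_prop))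
  rw [← h1, law_joint μ X hXm ρ hρ hGauss, integral_map hm.aemeasurable
    (Measurable.aestronglyMeasurable (by fun_prop))]
  simp [jMom]
end

section
/- Let Σ be an n×n positive definite real matrix and T a positive semidefinite n×n diagonal matrix. Let X be a centered Gaussian vector with covariance Σ and Y a centered Gaussian vector with covariance (Σ^{-1}+2T)^{-1}. Then for any bounded measurable function g: ℝⁿ → ℝ, E[exp(-⟨X, T X⟩) g(X)] = det(Iₙ + 2TΣ)^{-1/2} E[g(Y)]. -/
open MeasureTheory Matrix

lemma pi_gaussian_eq (n : ℕ) :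
    Measure.pi (fun _ : Fin n => ProbabilityTheory.gaussianReal 0 1) =
      (volume : Measure (Fin n → ℝ)).withDensity (fun x =>
        ENNReal.ofReal (∏ i, ProbabilityTheory.gaussianPDFReal 0 1 (x i))) := by
  apply Measure.pi_eq
  intro s hs
  rw [withDensity_apply _ (MeasurableSet.univ_pi hs), volume_pi, Measure.restrict_pi_pi,
    ← ofReal_integral_eq_lintegral_ofReal]
  · rw [integral_fintype_prod_eq_prod (fun _ x => ProbabilityTheory.gaussianPDFReal 0 1 x),
      ENNReal.ofReal_prod_of_nonneg]
    · refine Finset.prod_congr rfl fun i _ => ?_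
      rw [ProbabilityTheory.gaussianReal_apply_eq_integral _ one_ne_zero]
    · exact fun i _ => integral_nonneg (ProbabilityTheory.gaussianPDFReal_nonneg _ _)
  · exact Integrable.fintype_prod
      fun i => (ProbabilityTheory.integrable_gaussianPDFReal 0 1).restrict
  · exact Filter.Eventually.of_forall fun x =>
      Finset.prod_nonneg fun i _ => ProbabilityTheory.gaussianPDFReal_nonneg _ _ _

lemma map_eq_of_charFun {Ω : Type*} [MeasurableSpace Ω] (μ : Measure Ω) [IsProbabilityMeasure μ]
    {n : ℕ} (S A : Matrix (Fin n) (Fin n) ℝ) (hA : S = A * Aᵀ)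
    (X : Ω → (Fin n → ℝ)) (hXm : Measurable X)
    (hX : ∀ u : Fin n → ℝ,
      ∫ ω, Complex.exp (Complex.I * ((u ⬝ᵥ X ω : ℝ) : ℂ)) ∂μ =
        Complex.exp (-(((u ⬝ᵥ S *ᵥ u : ℝ) : ℂ)) / 2)) :
    μ.map X = (Measure.pi (fun _ : Fin n => ProbabilityTheory.gaussianReal 0 1)).map
      (fun z => A *ᵥ z) := by
  have hAm : Measurable (fun z : Fin n → ℝ => A *ᵥ z) :=
    (Continuous.matrix_mulVec continuous_const continuous_id).measurable
  have : IsProbabilityMeasure (μ.map X) := Measure.isProbabilityMeasure_map hXm.aemeasurable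
  have : IsProbabilityMeasure ((Measure.pi (fun _ : Fin n =>
      ProbabilityTheory.gaussianReal 0 1)).map (fun z => A *ᵥ z)) :=
    Measure.isProbabilityMeasure_map hAm.aemeasurable
  apply Measure.ext_of_charFunDual
  ext L
  rw [charFunDual_apply, charFunDual_apply, integral_map hXm.aemeasurable
    (Measurable.aestronglyMeasurable (by fun_prop)), integral_map hAm.aemeasurable
    (Measurable.aestronglyMeasurable (by fun_prop))]
  set u : Fin n → ℝ := fun i => L (Pi.single i 1) with hu
  have hL : ∀ x, L x = u ⬝ᵥ x := by
    intro x
    conv_lhs => rw [pi_eq_sum_univ' x]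
    simp [dotProduct, hu, mul_comm]
  simp_rw [hL]
  have h1 := hX u
  simp_rw [mul_comm Complex.I] at h1
  rw [h1]
  set w := Aᵀ *ᵥ u with hw
  have h2 : ∀ z : Fin n → ℝ, u ⬝ᵥ A *ᵥ z = w ⬝ᵥ z := by
    intro z
    rw [dotProduct_mulVec, hw, mulVec_transpose]
  have h3 : u ⬝ᵥ S *ᵥ u = w ⬝ᵥ w := by
    rw [hA, ← mulVec_mulVec, h2]
  simp_rw [h2, h3, dotProduct, Complex.ofReal_sum, Finset.sum_mul, Complex.exp_sum]
  rw [integral_fintype_prod_eq_prod (fun i (x : ℝ) => Complex.exp (((w i * x : ℝ) : ℂ) * Complex.I))]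
  rw [← Finset.sum_neg_distrib, Finset.sum_div, Complex.exp_sum]
  refine Finset.prod_congr rfl fun i _ => ?_
  have := ProbabilityTheory.charFun_gaussianReal (μ := 0) (v := 1) (w i)
  rw [charFun_apply_real] at this
  simp only [Complex.ofReal_mul]
  rw [this]
  congr 1
  simp
  ring

lemma integral_gaussian_vec {Ω : Type*} [MeasurableSpace Ω] (μ : Measure Ω) [IsProbabilityMeasure μ]
    {n : ℕ} (S : Matrix (Fin n) (Fin n) ℝ) (hS : S.PosDef)
    (X : Ω → (Fin n → ℝ)) (hXm : Measurable X)
    (hX : ∀ u : Fin n → ℝ,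
      ∫ ω, Complex.exp (Complex.I * ((u ⬝ᵥ X ω : ℝ) : ℂ)) ∂μ =
        Complex.exp (-(((u ⬝ᵥ S *ᵥ u : ℝ) : ℂ)) / 2))
    (f : (Fin n → ℝ) → ℝ) (hf : Measurable f) :
    ∫ ω, f (X ω) ∂μ = ((√(2 * Real.pi))⁻¹ ^ n * (√S.det)⁻¹) *
      ∫ x, Real.exp (-(x ⬝ᵥ S⁻¹ *ᵥ x) / 2) * f x := by
  obtain ⟨A, hAA, hAT⟩ : ∃ A : Matrix (Fin n) (Fin n) ℝ, A * A = S ∧ Aᵀ = A := by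
    open scoped MatrixOrder in
    refine ⟨CFC.sqrt S, CFC.sqrt_mul_sqrt_self S hS.posSemidef.nonneg, ?_⟩
    have := (CFC.sqrt_nonneg S).isSelfAdjoint
    simpa [IsSelfAdjoint, star_eq_conjTranspose] using this
  have hdet : A.det * A.det = S.det := by rw [← det_mul, hAA]
  have hd0 : A.det ≠ 0 := fun h => by
    have := hS.det_pos
    simp [← hdet, h] at this
  have hsq : √S.det = |A.det| := by rw [← hdet, Real.sqrt_mul_self_eq_abs]
  have hAm : Measurable (fun z : Fin n → ℝ => A *ᵥ z) :=
    (Continuous.matrix_mulVec continuous_const continuous_id).measurable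
  have hAm' : Measurable (fun z : Fin n → ℝ => A⁻¹ *ᵥ z) :=
    (Continuous.matrix_mulVec continuous_const continuous_id).measurable
  have hU : IsUnit A.det := isUnit_iff_ne_zero.mpr hd0
  have hpdf : ∀ z : Fin n → ℝ, ∏ i, ProbabilityTheory.gaussianPDFReal 0 1 (z i) =
      (√(2 * Real.pi))⁻¹ ^ n * Real.exp (-(z ⬝ᵥ z) / 2) := by
    intro z
    simp only [ProbabilityTheory.gaussianPDFReal, Finset.prod_mul_distrib, ← Real.exp_sum]
    simp [dotProduct, ← Finset.sum_div, pow_two]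
  have hvol := Real.map_matrix_volume_pi_eq_smul_volume_pi hd0
  rw [← integral_map hXm.aemeasurable hf.aestronglyMeasurable,
    map_eq_of_charFun μ S A (by rw [hAT, hAA]) X hXm hX,
    integral_map hAm.aemeasurable hf.aestronglyMeasurable, pi_gaussian_eq,
    integral_withDensity_eq_integral_toReal_smul]
  rotate_left
  · simp_rw [hpdf, dotProduct]
    fun_prop
  · exact Filter.Eventually.of_forall fun x => ENNReal.ofReal_lt_top
  have hq : ∀ z : Fin n → ℝ, (A *ᵥ z) ⬝ᵥ S⁻¹ *ᵥ (A *ᵥ z) = z ⬝ᵥ z := by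
    intro z
    have e1 : S⁻¹ *ᵥ (A *ᵥ z) = A⁻¹ *ᵥ z := by
      rw [← hAA, Matrix.mul_inv_rev, mulVec_mulVec, Matrix.mul_assoc, nonsing_inv_mul _ hU,
        Matrix.mul_one]
    have e2 : A *ᵥ z = z ᵥ* A := by
      rw [← vecMul_transpose, hAT]
    rw [e1, e2, ← dotProduct_mulVec, mulVec_mulVec, mul_nonsing_inv _ hU, one_mulVec]
  have hkey : ∫ x, Real.exp (-(x ⬝ᵥ S⁻¹ *ᵥ x) / 2) * f x ∂(volume.map (Matrix.toLin' A)) =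
      ∫ z, Real.exp (-(z ⬝ᵥ z) / 2) * f (A *ᵥ z) := by
    rw [integral_map]
    · simp only [toLin'_apply, hq]
    · exact hAm.aemeasurable
    · refine Measurable.aestronglyMeasurable (Measurable.mul ?_ hf)
      refine Continuous.measurable ?_
      have : Continuous fun x : Fin n → ℝ => S⁻¹ *ᵥ x :=
        Continuous.matrix_mulVec continuous_const continuous_id
      simp only [dotProduct]
      fun_prop
  rw [hvol, integral_smul_measure] at hkey
  have h4 : (ENNReal.ofReal |A.det⁻¹|).toReal = (√S.det)⁻¹ := by
    rw [ENNReal.toReal_ofReal (abs_nonneg _), abs_inv, hsq]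
  rw [h4, smul_eq_mul] at hkey
  rw [mul_assoc, hkey, ← integral_const_mul]
  refine integral_congr_ae (Filter.Eventually.of_forall fun z => ?_)
  simp only [smul_eq_mul]
  rw [ENNReal.toReal_ofReal (Finset.prod_nonneg fun i _ =>
    ProbabilityTheory.gaussianPDFReal_nonneg _ _ _), hpdf, mul_assoc]

theorem gaussian_tilt_formula
    {Ω Ω' : Type*} [MeasurableSpace Ω] [MeasurableSpace Ω']
    (μ : Measure Ω) [IsProbabilityMeasure μ] (ν : Measure Ω') [IsProbabilityMeasure ν]
    {n : ℕ} (S : Matrix (Fin n) (Fin n) ℝ) (hpd : S.PosDef)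
    (d : Fin n → ℝ) (hd : ∀ i, 0 ≤ d i)
    (X : Ω → (Fin n → ℝ)) (hXm : Measurable X)
    (hX : ∀ u : Fin n → ℝ,
      ∫ ω, Complex.exp (Complex.I * ((u ⬝ᵥ X ω : ℝ) : ℂ)) ∂μ =
        Complex.exp (-(((u ⬝ᵥ S *ᵥ u : ℝ) : ℂ)) / 2))
    (Y : Ω' → (Fin n → ℝ)) (hYm : Measurable Y)
    (hY : ∀ u : Fin n → ℝ,
      ∫ ω', Complex.exp (Complex.I * ((u ⬝ᵥ Y ω' : ℝ) : ℂ)) ∂ν =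
        Complex.exp
          (-(((u ⬝ᵥ (S⁻¹ + (2 : ℝ) • Matrix.diagonal d)⁻¹ *ᵥ u : ℝ) : ℂ)) / 2))
    (g : (Fin n → ℝ) → ℝ) (hg : Measurable g) (C : ℝ) (hgC : ∀ x, |g x| ≤ C) :
    ∫ ω, Real.exp (-(X ω ⬝ᵥ Matrix.diagonal d *ᵥ X ω)) * g (X ω) ∂μ =
      ((1 : Matrix (Fin n) (Fin n) ℝ) + (2 : ℝ) • (Matrix.diagonal d * S)).det ^
          (-(1 : ℝ) / 2) *
        ∫ ω', g (Y ω') ∂ν := by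
  set D : Matrix (Fin n) (Fin n) ℝ := Matrix.diagonal d with hD
  have hDps : D.PosSemidef := Matrix.PosSemidef.diagonal hd
  have hQ : (S⁻¹ + (2 : ℝ) • D).PosDef :=
    hpd.inv.add_posSemidef (hDps.smul (by norm_num))
  set Q := S⁻¹ + (2 : ℝ) • D with hQdef
  have hUS : IsUnit S.det := isUnit_iff_ne_zero.mpr hpd.det_pos.ne'
  have hUQ : IsUnit Q.det := isUnit_iff_ne_zero.mpr hQ.det_pos.ne'
  have hDm : Measurable fun x : Fin n → ℝ => Real.exp (-(x ⬝ᵥ D *ᵥ x)) * g x := by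
    refine Measurable.mul (Continuous.measurable ?_) hg
    have : Continuous fun x : Fin n → ℝ => D *ᵥ x :=
      Continuous.matrix_mulVec continuous_const continuous_id
    simp only [dotProduct]
    fun_prop
  have h1 := integral_gaussian_vec μ S hpd X hXm hX _ hDm
  have h2 := integral_gaussian_vec ν Q⁻¹ hQ.inv Y hYm hY g hg
  rw [h1, h2, nonsing_inv_nonsing_inv _ hUQ]
  have hdet : ((1 : Matrix (Fin n) (Fin n) ℝ) + (2 : ℝ) • (D * S)).det = Q.det * S.det := by
    rw [← det_mul, hQdef, add_mul, nonsing_inv_mul _ hUS, smul_mul_assoc]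
  have hint : ∀ x : Fin n → ℝ, Real.exp (-(x ⬝ᵥ S⁻¹ *ᵥ x) / 2) *
      (Real.exp (-(x ⬝ᵥ D *ᵥ x)) * g x) = Real.exp (-(x ⬝ᵥ Q *ᵥ x) / 2) * g x := by
    intro x
    rw [← mul_assoc, ← Real.exp_add, hQdef, add_mulVec, smul_mulVec, dotProduct_add,
      dotProduct_smul, smul_eq_mul]
    congr 2
    ring
  simp_rw [hint]
  have hdi : (Q⁻¹).det = Q.det⁻¹ := by rw [det_nonsing_inv, Ring.inverse_eq_inv']
  have hq := hQ.det_pos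
  have hs := hpd.det_pos
  have hpow : (Q.det * S.det) ^ (-(1 : ℝ) / 2) = (√Q.det)⁻¹ * (√S.det)⁻¹ := by
    rw [neg_div, Real.rpow_neg (mul_pos hq hs).le, ← Real.sqrt_eq_rpow, Real.sqrt_mul hq.le,
      mul_inv]
  rw [hdet, hpow, hdi, Real.sqrt_inv, inv_inv]
  have : √Q.det ≠ 0 := (Real.sqrt_pos.mpr hq).ne'
  field_simp
end
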